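/- Define the polynomials u_n(y) = Σ_{i≥1} a(n,i) y^i and v_n(y) = Σ_{i≥1} b(n,i) y^i in ℤ[y]. Then u_1(y) = 2y, and for all n ≥ 2, u_n(y) = (1 + y)·u_{n-1}(y) + 2·v_{n-1}(y). Equivalently, in terms of bivariate generating functions T_1(x,y) = Σ_{n≥1} u_n(y) x^n and T_2(x,y) = Σ_{n≥1} v_n(y) x^n, one has T_1 = 2xy + x·T_1 + xy·T_1 + 2x·T_2. -/

import Mathlib

open SimpleGraph Polynomial

/-- A 2-colored partition of a simple graph `G`: a partition of the vertex set into
nonempty parts, each inducing a connected subgraph, together with an assignment of one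
of two colors to each part such that distinct parts joined by an edge get different colors. -/
structure TwoColoredPartition {V : Type*} (G : SimpleGraph V) where
  parts : Set (Set V)
  nonempty : ∀ p ∈ parts, p.Nonempty
  covers : ∀ v : V, ∃ p, p ∈ parts ∧ v ∈ p
  disj : ∀ p ∈ parts, ∀ q ∈ parts, p ≠ q → Disjoint p q
  conn : ∀ p ∈ parts, (G.induce p).Connected
  color : parts → Fin 2
  proper : ∀ p q : parts, p ≠ q →
    (∃ v ∈ (p : Set V), ∃ w ∈ (q : Set V), G.Adj v w) → color p ≠ color q

/-- The size of a 2-colored partition: its number of parts. -/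
noncomputable def TwoColoredPartition.size {V : Type*} {G : SimpleGraph V}
    (T : TwoColoredPartition G) : ℕ :=
  T.parts.ncard

/-- The color of a vertex in a 2-colored partition: the color of the part containing it. -/
noncomputable def TwoColoredPartition.vcolor {V : Type*} {G : SimpleGraph V}
    (T : TwoColoredPartition G) (v : V) : Fin 2 :=
  T.color ⟨(T.covers v).choose, (T.covers v).choose_spec.1⟩

/-- All three vertices of the last triangle of `K₃ × Pₙ` (those whose path coordinate is
the last vertex of the path) have the same color. -/
def sameColorLastTriangle {n : ℕ}
    (T : TwoColoredPartition ((⊤ : SimpleGraph (Fin 3)) □ pathGraph n)) : Prop :=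
  ∀ v w : Fin 3 × Fin n, (v.2 : ℕ) = n - 1 → (w.2 : ℕ) = n - 1 → T.vcolor v = T.vcolor w

/-- Both colors occur among the three vertices of the last triangle of `K₃ × Pₙ`. -/
def bothColorsLastTriangle {n : ℕ}
    (T : TwoColoredPartition ((⊤ : SimpleGraph (Fin 3)) □ pathGraph n)) : Prop :=
  ∃ v w : Fin 3 × Fin n, (v.2 : ℕ) = n - 1 ∧ (w.2 : ℕ) = n - 1 ∧ T.vcolor v ≠ T.vcolor w

/-- `a n i`: the number of 2-colored partitions of `K₃ × Pₙ` of size `i` in which all three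
vertices of the last triangle have the same color. -/
noncomputable def a (n i : ℕ) : ℕ :=
  Nat.card {T : TwoColoredPartition ((⊤ : SimpleGraph (Fin 3)) □ pathGraph n) //
    T.size = i ∧ sameColorLastTriangle T}

/-- `b n i`: the number of 2-colored partitions of `K₃ × Pₙ` of size `i` in which both colors
occur among the vertices of the last triangle. -/
noncomputable def b (n i : ℕ) : ℕ :=
  Nat.card {T : TwoColoredPartition ((⊤ : SimpleGraph (Fin 3)) □ pathGraph n) //
    T.size = i ∧ bothColorsLastTriangle T}

/-- `uₙ(y) = ∑_{i ≥ 1} a(n,i) yⁱ ∈ ℤ[y]`. -/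
noncomputable def upoly (n : ℕ) : Polynomial ℤ :=
  ∑ᶠ (i : ℕ) (_ : 1 ≤ i), Polynomial.monomial i (a n i : ℤ)

/-- `vₙ(y) = ∑_{i ≥ 1} b(n,i) yⁱ ∈ ℤ[y]`. -/
noncomputable def vpoly (n : ℕ) : Polynomial ℤ :=
  ∑ᶠ (i : ℕ) (_ : 1 ≤ i), Polynomial.monomial i (b n i : ℤ)

/-- Monochromatic adjacency graph of a coloring. -/
def monoG {V : Type*} (G : SimpleGraph V) (c : V → Fin 2) : SimpleGraph V where
  Adj v w := G.Adj v w ∧ c v = c w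
  symm := ⟨fun _ _ h => ⟨h.1.symm, h.2.symm⟩⟩
  loopless := ⟨fun _ h => G.loopless.irrefl _ h.1⟩

/-- Number of monochromatic components. -/
noncomputable def ncomp {V : Type*} (G : SimpleGraph V) (c : V → Fin 2) : ℕ :=
  Nat.card (monoG G c).ConnectedComponent

theorem reach_eq {V A : Type*} {H : SimpleGraph V} (f : V → A)
    (hf : ∀ v w, H.Adj v w → f v = f w) {v w : V} (h : H.Reachable v w) : f v = f w := by
  obtain ⟨p⟩ := h
  induction p with
  | nil => rfl
  | cons h _ ih => exact (hf _ _ h).trans ih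

theorem card_cc {V A : Type*} (H : SimpleGraph V) (f : V → A) (hs : Function.Surjective f)
    (h1 : ∀ v w, H.Adj v w → f v = f w) (h2 : ∀ v w, f v = f w → H.Reachable v w) :
    Nat.card H.ConnectedComponent = Nat.card A := by
  refine Nat.card_congr (Equiv.ofBijective
    (Quot.lift f (fun v w h => reach_eq f h1 h)) ⟨?_, ?_⟩)
  · rintro ⟨v⟩ ⟨w⟩ h
    exact Quot.sound (h2 v w h)
  · intro x
    obtain ⟨v, rfl⟩ := hs x
    exact ⟨Quot.mk _ v, rfl⟩

namespace TwoColoredPartition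
variable {V : Type*} {G : SimpleGraph V}

theorem part_eq (T : TwoColoredPartition G) {p q : Set V} (hp : p ∈ T.parts) (hq : q ∈ T.parts)
    {v : V} (h1 : v ∈ p) (h2 : v ∈ q) : p = q := by
  by_contra h
  exact Set.disjoint_left.1 (T.disj p hp q hq h) h1 h2

theorem vcolor_eq (T : TwoColoredPartition G) {p : Set V} (hp : p ∈ T.parts) {v : V}
    (h : v ∈ p) : T.vcolor v = T.color ⟨p, hp⟩ := by
  unfold vcolor
  congr 2
  exact T.part_eq (T.covers v).choose_spec.1 hp (T.covers v).choose_spec.2 h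

theorem mem_iff (T : TwoColoredPartition G) {p : Set V} (hp : p ∈ T.parts) {v w : V}
    (h : v ∈ p) : w ∈ p ↔ (monoG G T.vcolor).Reachable v w := by
  constructor
  · intro hw
    have h1 := (T.conn p hp).preconnected ⟨v, h⟩ ⟨w, hw⟩
    let f : G.induce p →g monoG G T.vcolor :=
      ⟨Subtype.val, fun {x y} hxy => ⟨hxy, by rw [T.vcolor_eq hp x.2, T.vcolor_eq hp y.2]⟩⟩
    exact h1.map f
  · intro hr
    have := reach_eq (fun x => x ∈ p) ?_ hr
    · exact this.mp h
    · have key : ∀ x y, (monoG G T.vcolor).Adj x y → x ∈ p → y ∈ p := by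
        intro x y hxy hx
        obtain ⟨q, hq, hy⟩ := T.covers y
        by_cases e : p = q
        · rwa [e]
        · exfalso
          refine T.proper ⟨p, hp⟩ ⟨q, hq⟩ (by simpa using e) ⟨x, hx, y, hy, hxy.1⟩ ?_
          rw [← T.vcolor_eq hp hx, ← T.vcolor_eq hq hy]
          exact hxy.2
      intro x y hxy
      exact propext ⟨key x y hxy, key y x hxy.symm⟩

theorem parts_eq (T : TwoColoredPartition G) :
    T.parts = Set.range fun v => {w | (monoG G T.vcolor).Reachable v w} := by
  ext p
  constructor
  · intro hp
    obtain ⟨v, hv⟩ := T.nonempty p hp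
    exact ⟨v, by ext w; exact (T.mem_iff hp hv).symm⟩
  · rintro ⟨v, rfl⟩
    obtain ⟨p, hp, hv⟩ := T.covers v
    convert hp
    ext w; exact (T.mem_iff hp hv).symm

theorem ext' {T T' : TwoColoredPartition G} (hp : T.parts = T'.parts)
    (hc : ∀ v, T.vcolor v = T'.vcolor v) : T = T' := by
  have key : ∀ p (h : p ∈ T.parts) (h' : p ∈ T'.parts), T.color ⟨p, h⟩ = T'.color ⟨p, h'⟩ := by
    intro p h h'
    obtain ⟨v, hv⟩ := T.nonempty p h
    rw [← T.vcolor_eq h hv, ← T'.vcolor_eq h' hv, hc]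
  clear hc
  cases T; cases T'
  dsimp only at hp
  subst hp
  congr 1
  funext ⟨p, h⟩
  exact key p h h

theorem vcolor_inj : Function.Injective (vcolor : TwoColoredPartition G → V → Fin 2) := by
  intro T T' h
  refine ext' ?_ (congrFun h)
  rw [parts_eq, parts_eq, h]

theorem size_eq (T : TwoColoredPartition G) : T.size = ncomp G T.vcolor := by
  unfold size ncomp
  rw [← Nat.card_coe_set_eq]
  symm
  rw [parts_eq]
  refine card_cc _ (fun v => ⟨_, ⟨v, rfl⟩⟩) ?_ ?_ ?_
  · rintro ⟨_, ⟨v, rfl⟩⟩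
    exact ⟨v, rfl⟩
  · intro v w h
    apply Subtype.ext
    ext x
    exact ⟨fun h' => h.reachable.symm.trans h', fun h' => h.reachable.trans h'⟩
  · intro v w h
    have h' : w ∈ {x | (monoG G T.vcolor).Reachable v x} := by
      have e : {x | (monoG G T.vcolor).Reachable v x} = {x | (monoG G T.vcolor).Reachable w x} :=
        Subtype.ext_iff.1 h
      rw [e]; exact Reachable.refl _
    exact h'

theorem reach_color {c : V → Fin 2} {v w : V} (h : (monoG G c).Reachable v w) : c v = c w :=
  reach_eq (H := monoG G c) c (fun _ _ h => h.2) h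

/-- The 2-colored partition of a coloring. -/
noncomputable def ofColoring (c : V → Fin 2) : TwoColoredPartition G where
  parts := Set.range fun v => {w | (monoG G c).Reachable v w}
  nonempty := by rintro _ ⟨v, rfl⟩; exact ⟨v, Reachable.refl _⟩
  covers v := ⟨_, ⟨v, rfl⟩, Reachable.refl _⟩
  disj := by
    rintro _ ⟨v, rfl⟩ _ ⟨w, rfl⟩ h
    rw [Set.disjoint_left]
    intro x hx hy
    apply h
    ext z
    exact ⟨fun h' => (hy.trans hx.symm).trans h', fun h' => (hx.trans hy.symm).trans h'⟩
  conn := by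
    rintro _ ⟨v, rfl⟩
    have key : ∀ a b, ∀ p : (monoG G c).Walk a b, ∀ ha : (monoG G c).Reachable v a,
        ∀ hb : (monoG G c).Reachable v b,
        (G.induce {w | (monoG G c).Reachable v w}).Reachable ⟨a, ha⟩ ⟨b, hb⟩ := by
      intro a b p
      induction p with
      | nil => intro _ _; exact Reachable.refl _
      | @cons x y z h p ih =>
        intro ha hb
        have hy := ha.trans h.reachable
        refine Reachable.trans (Adj.reachable ?_) (ih hy hb)
        exact h.1
    have : Nonempty {w | (monoG G c).Reachable v w} := ⟨⟨v, Reachable.refl _⟩⟩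
    refine Connected.mk ?_
    rintro ⟨x, hx⟩ ⟨y, hy⟩
    obtain ⟨p⟩ := (Reachable.symm hx).trans hy
    exact key x y p hx hy
  color p := c p.2.choose
  proper := by
    rintro ⟨p, hp⟩ ⟨q, hq⟩ hne ⟨x, hx, y, hy, hxy⟩ h
    have e1 := hp.choose_spec
    have e2 := hq.choose_spec
    change c hp.choose = c hq.choose at h
    set v := hp.choose
    set w := hq.choose
    apply hne
    apply Subtype.ext
    change p = q
    change x ∈ p at hx
    change y ∈ q at hy
    rw [← e1] at hx ⊢
    rw [← e2] at hy ⊢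
    have hx' : (monoG G c).Reachable v x := hx
    have hy' : (monoG G c).Reachable w y := hy
    have hxy' : (monoG G c).Adj x y :=
      ⟨hxy, by rw [← reach_color hx', ← reach_color hy', h]⟩
    have hvw := (hx'.trans hxy'.reachable).trans hy'.symm
    ext z
    exact ⟨fun h' => hvw.symm.trans h', fun h' => hvw.trans h'⟩

theorem vcolor_ofColoring (c : V → Fin 2) : (ofColoring c : TwoColoredPartition G).vcolor = c := by
  funext v
  have hp : {w | (monoG G c).Reachable v w} ∈ (ofColoring c : TwoColoredPartition G).parts :=
    ⟨v, rfl⟩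
  rw [vcolor_eq _ hp (v := v) (Reachable.refl _)]
  change c hp.choose = c v
  have e := hp.choose_spec
  have : v ∈ {w | (monoG G c).Reachable hp.choose w} := by
    rw [show {w | (monoG G c).Reachable hp.choose w} = _ from e]; exact Reachable.refl _
  exact reach_color this

/-- 2-colored partitions are the same as vertex colorings. -/
noncomputable def equivColoring : TwoColoredPartition G ≃ (V → Fin 2) :=
  Equiv.ofBijective vcolor ⟨vcolor_inj, fun c => ⟨ofColoring c, vcolor_ofColoring c⟩⟩

theorem card_eq (P : (V → Fin 2) → Prop) (i : ℕ) :
    Nat.card {T : TwoColoredPartition G // T.size = i ∧ P T.vcolor} =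
      Nat.card {c : V → Fin 2 // ncomp G c = i ∧ P c} := by
  refine Nat.card_congr (equivColoring.subtypeEquiv ?_)
  intro T
  rw [size_eq]; rfl

end TwoColoredPartition

open Classical in
theorem finsum_lemma {C : Type*} [Fintype C] (f : C → ℕ) (hf : ∀ c, 1 ≤ f c) (P : C → Prop) :
    (∑ᶠ (i : ℕ) (_ : 1 ≤ i), Polynomial.monomial i
      ((Nat.card {c : C // f c = i ∧ P c} : ℕ) : ℤ)) =
      ∑ c, if P c then (Polynomial.X : Polynomial ℤ) ^ f c else 0 := by
  have h0 : ∀ i, ¬ 1 ≤ i → Nat.card {c : C // f c = i ∧ P c} = 0 := by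
    intro i hi
    have : IsEmpty {c : C // f c = i ∧ P c} := ⟨fun c => hi (c.2.1 ▸ hf c.1)⟩
    exact Nat.card_of_isEmpty
  have h1 : ∀ i, (∑ᶠ (_ : 1 ≤ i), Polynomial.monomial i
      ((Nat.card {c : C // f c = i ∧ P c} : ℕ) : ℤ)) = Polynomial.monomial i
      ((Nat.card {c : C // f c = i ∧ P c} : ℕ) : ℤ) := by
    intro i
    by_cases hi : 1 ≤ i
    · simp [hi]
    · rw [h0 i hi]; simp
  simp_rw [h1]
  rw [finsum_eq_sum_of_support_subset (s := Finset.univ.image f)]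
  · rw [← Finset.sum_fiberwise_of_maps_to (s := Finset.univ) (t := Finset.univ.image f) (g := f)
      (fun c _ => Finset.mem_image_of_mem _ (Finset.mem_univ c))]
    refine Finset.sum_congr rfl fun i _ => ?_
    rw [← Finset.sum_filter, Finset.filter_filter, Nat.card_eq_fintype_card,
      Fintype.card_subtype]
    rw [Finset.sum_congr rfl (g := fun _ => (Polynomial.X : Polynomial ℤ) ^ i)]
    · rw [Finset.sum_const, ← Polynomial.C_mul_X_pow_eq_monomial]
      simp
    · intro c hc
      rw [(Finset.mem_filter.1 hc).2.1]
  · intro i hi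
    by_contra hni
    apply hi
    have : IsEmpty {c : C // f c = i ∧ P c} :=
      ⟨fun c => hni (by rw [← c.2.1]; simp)⟩
    simp [Nat.card_of_isEmpty]

/-- The prism graph. -/
abbrev prism (n : ℕ) : SimpleGraph (Fin 3 × Fin n) := (⊤ : SimpleGraph (Fin 3)) □ pathGraph n

/-- Color `k` appears in the last triangle. -/
def appears {n : ℕ} (c : Fin 3 × Fin n → Fin 2) (k : Fin 2) : Prop :=
  ∃ w : Fin 3 × Fin n, (w.2 : ℕ) + 1 = n ∧ c w = k

/-- The last triangle is monochromatic. -/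
def lastMono {n : ℕ} (c : Fin 3 × Fin n → Fin 2) : Prop :=
  ∀ v w : Fin 3 × Fin n, (v.2 : ℕ) = n - 1 → (w.2 : ℕ) = n - 1 → c v = c w

/-- Extend by a monochromatic triangle. -/
def extc {n : ℕ} (c : Fin 3 × Fin n → Fin 2) (k : Fin 2) : Fin 3 × Fin (n + 1) → Fin 2 :=
  fun v => if h : (v.2 : ℕ) < n then c (v.1, ⟨v.2, h⟩) else k

theorem prism_adj {n : ℕ} (v w : Fin 3 × Fin n) : (prism n).Adj v w ↔
    (v.1 ≠ w.1 ∧ v.2 = w.2) ∨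
    (((v.2 : ℕ) + 1 = w.2 ∨ (w.2 : ℕ) + 1 = v.2) ∧ v.1 = w.1) := by
  rw [boxProd_adj, pathGraph_adj, top_adj]

/-- Inclusion of the smaller prism. -/
def inc {n : ℕ} (v : Fin 3 × Fin n) : Fin 3 × Fin (n + 1) := (v.1, v.2.castSucc)

theorem extc_inc {n : ℕ} (c : Fin 3 × Fin n → Fin 2) (k : Fin 2) (v) : extc c k (inc v) = c v := by
  simp [extc, inc]

theorem extc_last {n : ℕ} (c : Fin 3 × Fin n → Fin 2) (k : Fin 2) (i) :
    extc c k (i, Fin.last n) = k := by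
  simp [extc]

theorem inc_reach {n : ℕ} (c : Fin 3 × Fin n → Fin 2) (k : Fin 2) {v w}
    (h : (monoG (prism n) c).Reachable v w) :
    (monoG (prism (n + 1)) (extc c k)).Reachable (inc v) (inc w) := by
  let f : monoG (prism n) c →g monoG (prism (n + 1)) (extc c k) :=
    ⟨inc, fun {x y} hxy => ⟨by
      have := (prism_adj _ _).1 hxy.1
      rw [prism_adj]
      simpa [inc] using this, by rw [extc_inc, extc_inc]; exact hxy.2⟩⟩
  exact h.map f

theorem cases_v {n : ℕ} (v : Fin 3 × Fin (n + 1)) :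
    (∃ w, v = inc w) ∨ ∃ i, v = (i, Fin.last n) := by
  obtain ⟨i, j⟩ := v
  induction j using Fin.lastCases with
  | last => exact Or.inr ⟨i, rfl⟩
  | cast j => exact Or.inl ⟨(i, j), rfl⟩

theorem last_reach {n : ℕ} (c : Fin 3 × Fin n → Fin 2) (k : Fin 2) (i j : Fin 3) :
    (monoG (prism (n + 1)) (extc c k)).Reachable (i, Fin.last n) (j, Fin.last n) := by
  by_cases h : i = j
  · rw [h]
  · refine Adj.reachable ⟨(prism_adj _ _).2 (Or.inl ⟨h, rfl⟩), ?_⟩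
    rw [extc_last, extc_last]

/-- Map from the larger prism. -/
def retr {n : ℕ} {A : Type*} (g : Fin 3 × Fin n → A) (z : A) (v : Fin 3 × Fin (n + 1)) : A :=
  if h : (v.2 : ℕ) < n then g (v.1, ⟨v.2, h⟩) else z

theorem retr_inc {n : ℕ} {A : Type*} (g : Fin 3 × Fin n → A) (z : A) (v) :
    retr g z (inc v) = g v := by
  simp [retr, inc]

theorem retr_last {n : ℕ} {A : Type*} (g : Fin 3 × Fin n → A) (z : A) (i) :
    retr g z (i, Fin.last n) = z := by
  simp [retr]

theorem retr_adj {n : ℕ} {A : Type*} (c : Fin 3 × Fin n → Fin 2) (k : Fin 2)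
    (g : Fin 3 × Fin n → A) (z : A)
    (h1 : ∀ v w, (monoG (prism n) c).Adj v w → g v = g w)
    (h2 : ∀ v : Fin 3 × Fin n, (v.2 : ℕ) + 1 = n → c v = k → g v = z) (v w)
    (h : (monoG (prism (n + 1)) (extc c k)).Adj v w) : retr g z v = retr g z w := by
  have key : ∀ v i, (monoG (prism (n + 1)) (extc c k)).Adj (inc v) (i, Fin.last n) → g v = z := by
    rintro v i ⟨ha, hc⟩
    rw [extc_inc, extc_last] at hc
    rw [prism_adj] at ha
    refine h2 v ?_ hc
    have := v.2.isLt
    simp only [inc, Fin.ext_iff, Fin.val_castSucc, Fin.val_last] at ha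
    omega
  rcases cases_v v with ⟨v, rfl⟩ | ⟨i, rfl⟩ <;> rcases cases_v w with ⟨w, rfl⟩ | ⟨j, rfl⟩
  · rw [retr_inc, retr_inc]
    refine h1 v w ⟨?_, ?_⟩
    · have := (prism_adj _ _).1 h.1
      rw [prism_adj]
      simpa [inc] using this
    · simpa [extc_inc] using h.2
  · rw [retr_inc, retr_last]; exact key v j h
  · rw [retr_inc, retr_last]; exact (key w i h.symm).symm
  · rw [retr_last, retr_last]

theorem ncomp_appears {n : ℕ} (c : Fin 3 × Fin n → Fin 2) (k : Fin 2) (h : appears c k) :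
    ncomp (prism (n + 1)) (extc c k) = ncomp (prism n) c := by
  obtain ⟨w, hw, hk⟩ := h
  unfold ncomp
  let g := (monoG (prism n) c).connectedComponentMk
  have hlast : ∀ i, (monoG (prism (n + 1)) (extc c k)).Reachable (inc w) (i, Fin.last n) := by
    intro i
    refine Reachable.trans (Adj.reachable (v := (w.1, Fin.last n)) ⟨?_, ?_⟩) (last_reach c k _ _)
    · rw [prism_adj]
      simp [inc, hw]
    · rw [extc_inc, extc_last, hk]
  refine card_cc _ (retr g (g w)) ?_ (retr_adj c k g (g w) ?_ ?_) ?_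
  · rintro ⟨v⟩
    exact ⟨inc v, retr_inc _ _ _⟩
  · intro x y h
    exact ConnectedComponent.sound h.reachable
  · intro v hv hc
    by_cases e : v = w
    · rw [e]
    · refine ConnectedComponent.sound (Adj.reachable ⟨?_, hc.trans hk.symm⟩)
      rw [prism_adj]
      have e2 : v.2 = w.2 := Fin.ext (by omega)
      exact Or.inl ⟨fun e1 => e (Prod.ext e1 e2), e2⟩
  · intro x y hxy
    rcases cases_v x with ⟨x, rfl⟩ | ⟨i, rfl⟩ <;> rcases cases_v y with ⟨y, rfl⟩ | ⟨j, rfl⟩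
    · rw [retr_inc, retr_inc] at hxy
      exact inc_reach c k (ConnectedComponent.exact hxy)
    · rw [retr_inc, retr_last] at hxy
      exact (inc_reach c k (ConnectedComponent.exact hxy)).trans (hlast j)
    · rw [retr_inc, retr_last] at hxy
      exact (hlast i).symm.trans (inc_reach c k (ConnectedComponent.exact hxy))
    · exact last_reach c k i j

theorem ncomp_not_appears {n : ℕ} (c : Fin 3 × Fin n → Fin 2) (k : Fin 2) (h : ¬ appears c k) :
    ncomp (prism (n + 1)) (extc c k) = ncomp (prism n) c + 1 := by
  unfold ncomp
  have : Finite (monoG (prism n) c).ConnectedComponent := Quot.finite _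
  rw [← Finite.card_option]
  let g := fun v => some ((monoG (prism n) c).connectedComponentMk v)
  refine card_cc _ (retr g none) ?_ (retr_adj c k g none ?_ ?_) ?_
  · rintro (_ | ⟨⟨v⟩⟩)
    · exact ⟨(0, Fin.last n), retr_last _ _ _⟩
    · exact ⟨inc v, retr_inc _ _ _⟩
  · intro x y h
    exact congrArg some (ConnectedComponent.sound h.reachable)
  · intro v hv hc
    exact absurd ⟨v, hv, hc⟩ h
  · intro x y hxy
    rcases cases_v x with ⟨x, rfl⟩ | ⟨i, rfl⟩ <;> rcases cases_v y with ⟨y, rfl⟩ | ⟨j, rfl⟩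
    · rw [retr_inc, retr_inc] at hxy
      exact inc_reach c k (ConnectedComponent.exact (Option.some.inj hxy))
    · rw [retr_inc, retr_last] at hxy
      cases hxy
    · rw [retr_inc, retr_last] at hxy
      cases hxy
    · exact last_reach c k i j

theorem ncomp_pos {n : ℕ} (c : Fin 3 × Fin (n + 1) → Fin 2) : 1 ≤ ncomp (prism (n + 1)) c := by
  unfold ncomp
  have : Finite (monoG (prism (n + 1)) c).ConnectedComponent := Quot.finite _
  have : Nonempty (monoG (prism (n + 1)) c).ConnectedComponent :=
    ⟨connectedComponentMk _ (0, 0)⟩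
  exact Nat.card_pos

open Classical in
theorem upoly_eq (n : ℕ) : upoly (n + 1) = ∑ c : Fin 3 × Fin (n + 1) → Fin 2,
    if lastMono c then (Polynomial.X : Polynomial ℤ) ^ ncomp (prism (n + 1)) c else 0 := by
  rw [← finsum_lemma _ ncomp_pos]
  unfold upoly
  refine finsum_congr fun i => finsum_congr fun _ => ?_
  rw [← TwoColoredPartition.card_eq]
  rfl

open Classical in
theorem vpoly_eq (n : ℕ) : vpoly (n + 1) = ∑ c : Fin 3 × Fin (n + 1) → Fin 2,
    if ¬ lastMono c then (Polynomial.X : Polynomial ℤ) ^ ncomp (prism (n + 1)) c else 0 := by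
  refine Eq.trans ?_ ((finsum_lemma (ncomp (prism (n + 1))) ncomp_pos
    (fun c => ¬ lastMono c)).trans (Finset.sum_congr rfl fun c _ => by congr))
  unfold vpoly
  refine finsum_congr fun i => finsum_congr fun _ => ?_
  rw [← TwoColoredPartition.card_eq (fun c => ¬ lastMono c)]
  unfold b
  simp only [lastMono, bothColorsLastTriangle, not_forall, exists_prop]

/-- Colorings with monochromatic last triangle. -/
def extEquiv (n : ℕ) : ((Fin 3 × Fin n → Fin 2) × Fin 2) ≃
    {c : Fin 3 × Fin (n + 1) → Fin 2 // lastMono c} where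
  toFun p := ⟨extc p.1 p.2, by
    intro v w hv hw
    simp only [add_tsub_cancel_right] at hv hw
    simp [extc, hv, hw]⟩
  invFun c := (fun v => c.1 (inc v), c.1 (0, Fin.last n))
  left_inv p := by
    refine Prod.ext (funext fun v => ?_) ?_
    · exact extc_inc _ _ v
    · exact extc_last _ _ _
  right_inv c := by
    apply Subtype.ext
    funext v
    rcases cases_v v with ⟨v, rfl⟩ | ⟨i, rfl⟩
    · exact extc_inc _ _ v
    · refine (extc_last _ _ _).trans (c.2 _ _ ?_ ?_) <;> simp

open Classical in
theorem upoly_step (n : ℕ) : upoly (n + 1) = ∑ c : Fin 3 × Fin n → Fin 2, ∑ k : Fin 2,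
    (Polynomial.X : Polynomial ℤ) ^ (ncomp (prism n) c + if appears c k then 0 else 1) := by
  rw [upoly_eq, ← Finset.sum_filter, ← Finset.sum_subtype_eq_sum_filter, Finset.subtype_univ,
    ← (extEquiv n).sum_comp, Fintype.sum_prod_type]
  refine Finset.sum_congr rfl fun c _ => Finset.sum_congr rfl fun k _ => ?_
  change Polynomial.X ^ ncomp (prism (n + 1)) (extc c k) = _
  by_cases h : appears c k
  · rw [ncomp_appears c k h]; simp [h]
  · rw [ncomp_not_appears c k h]; simp [h]

/-- `u₁(y) = 2y`, and for all `n ≥ 2`, `uₙ(y) = (1 + y)·u_{n-1}(y) + 2·v_{n-1}(y)`.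
Equivalently, `T₁ = 2xy + x·T₁ + xy·T₁ + 2x·T₂` for the corresponding bivariate
generating functions. -/
theorem upoly_recurrence :
    upoly 1 = 2 * Polynomial.X ∧
    ∀ n : ℕ, 2 ≤ n →
      upoly n = (1 + Polynomial.X) * upoly (n - 1) + 2 * vpoly (n - 1) := by
  classical
  constructor
  · rw [upoly_step 0]
    have h1 : ∀ c : Fin 3 × Fin 0 → Fin 2, ncomp (prism 0) c = 0 := by
      intro c
      unfold ncomp
      have : IsEmpty (monoG (prism 0) c).ConnectedComponent :=
        ⟨fun q => by obtain ⟨v⟩ := q; exact v.2.elim0⟩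
      exact Nat.card_of_isEmpty
    have h2 : ∀ (c : Fin 3 × Fin 0 → Fin 2) k, ¬ appears c k := by
      rintro c k ⟨w, _⟩
      exact w.2.elim0
    simp [h1, h2]
  · intro m hm
    obtain ⟨n, rfl⟩ : ∃ n, m = n + 2 := ⟨m - 2, by omega⟩
    change upoly (n + 1 + 1) = (1 + Polynomial.X) * upoly (n + 1) + 2 * vpoly (n + 1)
    rw [upoly_step, upoly_eq, vpoly_eq, Finset.mul_sum, Finset.mul_sum, ← Finset.sum_add_distrib]
    refine Finset.sum_congr rfl fun c _ => ?_
    rw [Fin.sum_univ_two]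
    have hex : ∀ v : Fin 3 × Fin (n + 1), (v.2 : ℕ) + 1 = n + 1 ↔ (v.2 : ℕ) = n + 1 - 1 := by
      intro v; omega
    by_cases h : lastMono c
    · have hk : ∀ k, appears c k ↔ k = c (0, Fin.last n) := by
        intro k
        constructor
        · rintro ⟨w, hw, rfl⟩
          exact h _ _ ((hex w).1 hw) (by simp)
        · rintro rfl
          exact ⟨_, by simp, rfl⟩
      simp only [hk, h, if_true, not_true, if_false]
      generalize c (0, Fin.last n) = k
      fin_cases k <;> simp <;> ring
    · have hk : ∀ k, appears c k := by
        simp only [lastMono, not_forall] at h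
        obtain ⟨v, w, hv, hw, hne⟩ := h
        intro k
        by_cases e : c v = k
        · exact ⟨v, (hex v).2 hv, e⟩
        · exact ⟨w, (hex w).2 hw, by omega⟩
      simp only [hk, h, if_true, if_false, not_false_iff]
      ring
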